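/- Let X be a geometric tree, T a generic cellular merge tree with leaves l₁,…,lₙ of values m₁,…,mₙ, and f:X→ℝ continuous with finitely many local minima. Then MT(f) ≅ T if and only if: (1) f has exactly n local minima X₁,…,Xₙ with values m₁,…,mₙ, and (2) for all i≠j, the maximum of f on the shortest path between X_i and X_j equals π(LCA(l_i,l_j)). -/

import Mathlib

open scoped Classical

noncomputable section

instance dartTop {V : Type*} (G : SimpleGraph V) : TopologicalSpace G.Dart := ⊥

/-- Gluing relation for the geometric realization of a graph: one copy of `[0,1]` per
oriented edge, opposite orientations identified by `t ↦ 1-t`, and starting points of edges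
with the same initial vertex identified. -/
def treeRel {V : Type*} (G : SimpleGraph V) :
    (G.Dart × ↥(Set.Icc (0:ℝ) 1)) → (G.Dart × ↥(Set.Icc (0:ℝ) 1)) → Prop :=
  fun p q =>
    (p.1 = q.1.symm ∧ (p.2 : ℝ) = 1 - (q.2 : ℝ)) ∨
    (p.1.toProd.1 = q.1.toProd.1 ∧ (p.2 : ℝ) = 0 ∧ (q.2 : ℝ) = 0)

/-- The geometric realization of a graph. -/
def TreeSpace {V : Type*} (G : SimpleGraph V) := Quot (treeRel G)

instance {V : Type*} (G : SimpleGraph V) : TopologicalSpace (TreeSpace G) :=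
  instTopologicalSpaceQuot
/-- Sublevel set of a function. -/
def sub {X : Type*} (f : X → ℝ) (t : ℝ) : Set X := {x | f x ≤ t}
/-- A local minimum of `f`: a connected set on which `f` is constant, such that every
connected set strictly containing it contains a point of strictly larger value. -/
def IsLocMin {X : Type*} [TopologicalSpace X] (f : X → ℝ) (M : Set X) : Prop :=
  IsConnected M ∧ (∃ c : ℝ, ∀ x ∈ M, f x = c) ∧
    ∀ M' : Set X, IsConnected M' → M ⊂ M' → ∃ x ∈ M', ∀ y ∈ M, f y < f x
/-- Combinatorial data for a cellular merge tree: a finite rooted tree with a real value at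
each node, strictly increasing towards the root; the root carries an infinite upward ray. -/
structure MergeTreeData where
  n : ℕ
  parent : Fin n → Fin n
  root : Fin n
  hroot : parent root = root
  hreach : ∀ v, ∃ k, parent^[k] v = root
  val : Fin n → ℝ
  hval : ∀ v, v ≠ root → val v < val (parent v)

namespace MergeTreeData

variable (d : MergeTreeData)

/-- Points of the edge attached below each node (for the root: the infinite upward ray). -/
def Carrier : Set (Fin d.n × ℝ) :=
  {p | d.val p.1 ≤ p.2 ∧ (p.1 ≠ d.root → p.2 ≤ d.val (d.parent p.1))}

/-- Glue the top of each edge to the bottom of the parent's edge. -/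
def glueRel : ↥d.Carrier → ↥d.Carrier → Prop := fun a b =>
  a.1.2 = b.1.2 ∧ d.parent a.1.1 = b.1.1 ∧ a.1.2 = d.val (d.parent a.1.1)

/-- The geometric realization of the cellular merge tree `d`. -/
def Space := Quot d.glueRel

instance : TopologicalSpace d.Space := instTopologicalSpaceQuot

/-- The gauge of the canonical cellular merge tree. -/
def gauge : d.Space → ℝ := Quot.lift (fun a => a.1.2) (fun _ _ h => h.1)

/-- `v` is a descendant of `w` (possibly `v = w`). -/
def Desc (v w : Fin d.n) : Prop := ∃ k, d.parent^[k] v = w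

def IsLeafNode (v : Fin d.n) : Prop := ∀ w, d.parent w = v → w = v

def IsBranchNode (v : Fin d.n) : Prop := 2 ≤ Nat.card {w : Fin d.n // d.parent w = v ∧ w ≠ v}

/-- Generic: binary (each node has zero or two children) and leaves take distinct values. -/
def Generic : Prop :=
  (∀ v, Nat.card {w : Fin d.n // d.parent w = v ∧ w ≠ v} = 0 ∨
        Nat.card {w : Fin d.n // d.parent w = v ∧ w ≠ v} = 2) ∧
  ∀ v w, d.IsLeafNode v → d.IsLeafNode w → v ≠ w → d.val v ≠ d.val w

/-- `a` is the least common ancestor of `u` and `w`. -/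
def IsLCA (u w a : Fin d.n) : Prop :=
  d.Desc u a ∧ d.Desc w a ∧ ∀ b, d.Desc u b → d.Desc w b → d.Desc a b

/-- The type of leaves. -/
def Leaf := {v : Fin d.n // d.IsLeafNode v}

end MergeTreeData

/-- Isomorphism of gauged spaces: a homeomorphism commuting with the gauges. -/
def GaugedIso {A B : Type*} [TopologicalSpace A] [TopologicalSpace B]
    (πA : A → ℝ) (πB : B → ℝ) : Prop :=
  ∃ e : A ≃ₜ B, ∀ x, πB (e x) = πA x

/-- A gauged space is a cellular merge tree if it is isomorphic (as a gauged space) to the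
realization of some combinatorial merge tree data. -/
def IsCellularMergeTree {A : Type*} [TopologicalSpace A] (π : A → ℝ) : Prop :=
  ∃ d : MergeTreeData, GaugedIso d.gauge π
/-- The epigraph of `f`. -/
def epi {X : Type*} (f : X → ℝ) : Set (X × ℝ) := {p | f p.1 ≤ p.2}

/-- The merge tree relation on the epigraph: identify `(x,t)` and `(y,t)` when `x` and `y`
lie in the same connected component of the sublevel set at `t`. -/
def mtRel {X : Type*} [TopologicalSpace X] (f : X → ℝ) : ↥(epi f) → ↥(epi f) → Prop :=
  fun a b => a.1.2 = b.1.2 ∧ a.1.1 ∈ connectedComponentIn (sub f a.1.2) b.1.1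

/-- The merge tree of a function. -/
def MergeTree {X : Type*} [TopologicalSpace X] (f : X → ℝ) := Quot (mtRel f)

instance {X : Type*} [TopologicalSpace X] (f : X → ℝ) : TopologicalSpace (MergeTree f) :=
  instTopologicalSpaceQuot

/-- The gauge on the merge tree of a function. -/
def mtGauge {X : Type*} [TopologicalSpace X] (f : X → ℝ) : MergeTree f → ℝ :=
  Quot.lift (fun a => a.1.2) (fun _ _ h => h.1)

/-! ### Arcs in abstract tree-like spaces -/

/-- Every point separates the space in a locally one-dimensional way. -/
def SepProp (X : Type*) [TopologicalSpace X] : Prop :=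
  ∀ z x : X, x ≠ z → ∃ c : X → ℝ, Continuous c ∧ c z = 0 ∧ 0 < c x ∧ (∀ y, c y = 0 → y = z) ∧
    ∃ ε > 0, ∀ y y', 0 < c y → c y < ε → c y = c y' → y = y'

/-- There is an arc (possibly degenerate) from `x` to `y`. -/
def HasArc {X : Type*} [TopologicalSpace X] (x y : X) : Prop :=
  ∃ (a b : ℝ) (g : ℝ → X), a ≤ b ∧ ContinuousOn g (Set.Icc a b) ∧ Set.InjOn g (Set.Icc a b) ∧
    g a = x ∧ g b = y

theorem SepProp.t2 {X : Type*} [TopologicalSpace X] (h : SepProp X) : T2Space X := by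
  refine ⟨fun x z hxz => ?_⟩
  obtain ⟨c, hc, hz, hx, -⟩ := h z x hxz
  refine ⟨c ⁻¹' Set.Ioi (c x / 2), c ⁻¹' Set.Iio (c x / 2), isOpen_Ioi.preimage hc,
    isOpen_Iio.preimage hc, ?_, ?_, ?_⟩
  · simp; linarith
  · simp [hz]; linarith
  · refine Disjoint.preimage _ ?_
    rw [Set.disjoint_left]
    intro a h1 h2
    simp at h1 h2
    linarith

theorem arc_subset {X : Type*} [TopologicalSpace X] (h : SepProp X) {a b : ℝ} {g : ℝ → X}
    (hg : ContinuousOn g (Set.Icc a b)) (hi : Set.InjOn g (Set.Icc a b))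
    {C : Set X} (hC : IsPreconnected C) (ha : g a ∈ C) (hb : g b ∈ C) :
    ∀ r ∈ Set.Icc a b, g r ∈ C := by
  intro r hr
  by_contra hz
  obtain ⟨c, hc, hcz, hca, hc0, ε, hε, hinj⟩ := h (g r) (g a) (by rintro h; rw [h] at ha; exact hz ha)
  have hcb : 0 < c (g b) := by
    by_contra hneg
    push Not at hneg
    obtain ⟨y, hy, hy0⟩ := hC.intermediate_value hb ha hc.continuousOn ⟨hneg, hca.le⟩
    exact hz (hc0 y hy0 ▸ hy)
  set δ := min (ε / 2) (min (c (g a)) (c (g b))) with hδ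
  have hδ0 : 0 < δ := by positivity
  have h1 : δ < ε := lt_of_le_of_lt (min_le_left _ _) (by linarith)
  have h2 : δ ≤ c (g a) := (min_le_right _ _).trans (min_le_left _ _)
  have h3 : δ ≤ c (g b) := (min_le_right _ _).trans (min_le_right _ _)
  have s1 : Set.Icc a r ⊆ Set.Icc a b := Set.Icc_subset_Icc_right hr.2
  have s2 : Set.Icc r b ⊆ Set.Icc a b := Set.Icc_subset_Icc_left hr.1
  obtain ⟨s, hs, hsv⟩ := intermediate_value_Icc' (f := c ∘ g) hr.1
    (hc.comp_continuousOn (hg.mono s1)) (show δ ∈ _ from ⟨by simp [hcz, hδ0.le], h2⟩)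
  obtain ⟨s', hs', hsv'⟩ := intermediate_value_Icc (f := c ∘ g) hr.2
    (hc.comp_continuousOn (hg.mono s2)) (show δ ∈ _ from ⟨by simp [hcz, hδ0.le], h3⟩)
  simp only [Function.comp] at hsv hsv'
  have := hinj (g s) (g s') (by rw [hsv]; exact hδ0) (by rw [hsv]; exact h1) (by rw [hsv, hsv'])
  have e := hi (s1 hs) (s2 hs') this
  have e2 : s = r := le_antisymm hs.2 (e ▸ hs'.1)
  rw [e2, hcz] at hsv
  linarith

theorem HasArc.refl {X : Type*} [TopologicalSpace X] (x : X) : HasArc x x :=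
  ⟨0, 0, fun _ => x, le_rfl, continuousOn_const, by simp, rfl, rfl⟩

theorem HasArc.symm {X : Type*} [TopologicalSpace X] {x y : X} (h : HasArc x y) : HasArc y x := by
  obtain ⟨a, b, g, hab, hg, hi, rfl, rfl⟩ := h
  refine ⟨-b, -a, fun t => g (-t), by linarith, ?_, ?_, by simp, by simp⟩
  · refine hg.comp continuous_neg.continuousOn ?_
    intro t ht
    constructor <;> linarith [ht.1, ht.2]
  · intro t ht s hs hts
    have := hi (x₁ := -t) (x₂ := -s) ⟨by linarith [ht.2], by linarith [ht.1]⟩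
      ⟨by linarith [hs.2], by linarith [hs.1]⟩ hts
    linarith

theorem HasArc.trans {X : Type*} [TopologicalSpace X] [T2Space X] {x y z : X}
    (h : HasArc x y) (h' : HasArc y z) : HasArc x z := by
  obtain ⟨a, b, g, hab, hg, hi, rfl, rfl⟩ := h
  obtain ⟨c, e, k, hce, hk, hki, hkc, rfl⟩ := h'
  have hK : IsClosed (k '' Set.Icc c e) := (isCompact_Icc.image_of_continuousOn hk).isClosed
  have hS : IsCompact (Set.Icc a b ∩ g ⁻¹' (k '' Set.Icc c e)) :=
    isCompact_Icc.of_isClosed_subset (hg.preimage_isClosed_of_isClosed isClosed_Icc hK)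
      Set.inter_subset_left
  obtain ⟨s, ⟨hs, u, hu, hus⟩, hmin⟩ := hS.exists_isLeast
    ⟨b, ⟨hab, le_rfl⟩, c, ⟨le_rfl, hce⟩, hkc⟩
  have c1 : ContinuousOn (fun r => if r ≤ s then g r else k (r - s + u)) (Set.Icc a s) := by
    refine (hg.mono (Set.Icc_subset_Icc_right hs.2)).congr ?_
    intro r hr
    simp [hr.2]
  have c2 : ContinuousOn (fun r => if r ≤ s then g r else k (r - s + u))
      (Set.Icc s (s + e - u)) := by
    have : ContinuousOn (fun r => k (r - s + u)) (Set.Icc s (s + e - u)) := by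
      refine hk.comp (by fun_prop) ?_
      intro r hr
      constructor <;> linarith [hr.1, hr.2, hu.1, hu.2]
    refine this.congr ?_
    intro r hr
    by_cases hrs : r ≤ s
    · have : r = s := le_antisymm hrs hr.1
      subst this
      simp [hus]
    · simp [hrs]
  have hun : Set.Icc a s ∪ Set.Icc s (s + e - u) = Set.Icc a (s + e - u) :=
    Set.Icc_union_Icc_eq_Icc hs.1 (by linarith [hu.2])
  refine ⟨a, s + e - u, _, by linarith [hs.1, hu.2],
    hun ▸ c1.union_of_isClosed c2 isClosed_Icc isClosed_Icc, ?_, by simp [hs.1], ?_⟩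
  · have key : ∀ r ∈ Set.Icc a (s + e - u), ∀ r' ∈ Set.Icc a (s + e - u), r ≤ s → s < r' →
        g r ≠ k (r' - s + u) := by
      intro r hr r' hr' h1 h2 heq
      have m : r' - s + u ∈ Set.Icc c e := ⟨by linarith [hu.1], by linarith [hr'.2]⟩
      have : s ≤ r := hmin ⟨⟨hr.1, h1.trans hs.2⟩, _, m, heq.symm⟩
      have hrs : r = s := le_antisymm h1 this
      rw [hrs, ← hus] at heq
      have := hki hu m heq
      linarith
    intro r hr r' hr' hrr
    simp only at hrr
    by_cases h1 : r ≤ s <;> by_cases h2 : r' ≤ s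
    · simp only [h1, h2, if_true] at hrr
      exact hi ⟨hr.1, h1.trans hs.2⟩ ⟨hr'.1, h2.trans hs.2⟩ hrr
    · simp only [h1, h2, if_true, if_false] at hrr
      exact absurd hrr (key r hr r' hr' h1 (not_le.1 h2))
    · simp only [h1, h2, if_true, if_false] at hrr
      exact absurd hrr.symm (key r' hr' r hr h2 (not_le.1 h1))
    · simp only [h1, h2, if_false] at hrr
      push Not at h1 h2
      have := hki (x₁ := r - s + u) (x₂ := r' - s + u) ⟨by linarith [hu.1], by linarith [hr.2]⟩
        ⟨by linarith [hu.1], by linarith [hr'.2]⟩ hrr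
      linarith
  · by_cases hl : s + e - u ≤ s
    · have : u = e := le_antisymm hu.2 (by linarith)
      subst this
      simp [hus]
    · simp only [hl, if_false]
      congr 1
      ring

theorem exists_path_trim {X : Type*} [TopologicalSpace X] {A B : Set X}
    (hA : IsClosed A) (hB : IsClosed B) (hAB : Disjoint A B) {p q : X} (hp : p ∈ A) (hq : q ∈ B)
    (h : HasArc p q) : ∃ (p' q' : X) (γ : Path p' q'), p' ∈ A ∧ q' ∈ B ∧ Function.Injective γ ∧
      Set.range γ ∩ A = {p'} ∧ Set.range γ ∩ B = {q'} := by
  obtain ⟨a, b, g, hab, hg, hi, rfl, rfl⟩ := h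
  have hS : IsCompact (Set.Icc a b ∩ g ⁻¹' A) :=
    isCompact_Icc.of_isClosed_subset (hg.preimage_isClosed_of_isClosed isClosed_Icc hA)
      Set.inter_subset_left
  obtain ⟨a', ⟨ha', haA⟩, hmax⟩ := hS.exists_isGreatest ⟨a, ⟨le_rfl, hab⟩, hp⟩
  have sub1 : Set.Icc a' b ⊆ Set.Icc a b := Set.Icc_subset_Icc_left ha'.1
  have hS' : IsCompact (Set.Icc a' b ∩ g ⁻¹' B) :=
    isCompact_Icc.of_isClosed_subset
      ((hg.mono sub1).preimage_isClosed_of_isClosed isClosed_Icc hB) Set.inter_subset_left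
  obtain ⟨b', ⟨hb', hbB⟩, hmin⟩ := hS'.exists_isLeast ⟨b, ⟨ha'.2, le_rfl⟩, hq⟩
  have sub2 : Set.Icc a' b' ⊆ Set.Icc a b := Set.Icc_subset_Icc ha'.1 hb'.2
  have hlt : a' < b' := by
    refine lt_of_le_of_ne hb'.1 ?_
    rintro rfl
    exact Set.disjoint_left.1 hAB haA hbB
  have hmem : ∀ t : unitInterval, a' + t * (b' - a') ∈ Set.Icc a' b' := by
    intro t
    have h0 := t.2.1
    have h1 := t.2.2
    constructor
    · nlinarith
    · nlinarith
  let γ : Path (g a') (g b') :=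
    { toFun := fun t => g (a' + t * (b' - a'))
      continuous_toFun := by
        refine (hg.mono sub2).comp_continuous (by fun_prop) hmem
      source' := by simp
      target' := by simp }
  have hγ : ∀ t, γ t = g (a' + t * (b' - a')) := fun t => rfl
  refine ⟨g a', g b', γ, haA, hbB, ?_, ?_, ?_⟩
  · intro t t' htt
    rw [hγ, hγ] at htt
    have := hi (sub2 (hmem t)) (sub2 (hmem t')) htt
    have h2 : (t : ℝ) * (b' - a') = t' * (b' - a') := by linarith
    exact Subtype.ext (mul_right_cancel₀ (by linarith) h2)
  · apply Set.Subset.antisymm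
    · rintro _ ⟨⟨t, rfl⟩, ht⟩
      have h1 := hmax ⟨sub2 (hmem t), ht⟩
      have h2 : a' + t * (b' - a') = a' := le_antisymm h1 (hmem t).1
      rw [hγ, h2]; rfl
    · rintro _ rfl
      exact ⟨⟨0, by simp⟩, haA⟩
  · apply Set.Subset.antisymm
    · rintro _ ⟨⟨t, rfl⟩, ht⟩
      have h1 := hmin ⟨⟨(hmem t).1, (hmem t).2.trans hb'.2⟩, ht⟩
      have h2 : a' + t * (b' - a') = b' := le_antisymm (hmem t).2 h1
      rw [hγ, h2]; rfl
    · rintro _ rfl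
      exact ⟨⟨1, by simp⟩, hbB⟩

theorem path_subset {X : Type*} [TopologicalSpace X] (h : SepProp X) {p q : X} (γ : Path p q)
    (hi : Function.Injective γ) {C : Set X} (hC : IsPreconnected C) (hp : p ∈ C) (hq : q ∈ C) :
    Set.range γ ⊆ C := by
  rintro _ ⟨t, rfl⟩
  have := arc_subset h (a := 0) (b := 1) (g := γ.extend) γ.continuous_extend.continuousOn ?_ hC
    (by simpa using hp) (by simpa using hq) t t.2
  · simpa using this
  · intro s hs s' hs' hss
    rw [Path.extend_apply _ hs, Path.extend_apply _ hs'] at hss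
    exact congrArg Subtype.val (hi hss)

/-! ### The geometric realization of a tree -/

section TreeTop

variable {V : Type} (G : SimpleGraph V)

/-- The point at parameter `t` of an oriented edge. -/
def tpt (e : G.Dart) (t : Set.Icc (0:ℝ) 1) : TreeSpace G := Quot.mk (treeRel G) (e, t)

/-- Linear extension of a function on the vertices. -/
def linExt (σ : V → ℝ) : TreeSpace G → ℝ :=
  Quot.lift (fun p => (1 - (p.2 : ℝ)) * σ p.1.fst + p.2 * σ p.1.snd) (by
    rintro ⟨e, t⟩ ⟨e', t'⟩ (⟨h1, h2⟩ | ⟨h1, h2, h3⟩)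
    · simp only at h1 h2 ⊢
      subst h1
      rw [h2]
      simp only [SimpleGraph.Dart.symm_toProd, Prod.fst_swap, Prod.snd_swap]
      ring
    · simp only at h1 h2 h3 ⊢
      rw [h1, h2, h3]
      ring)

theorem linExt_tpt (σ : V → ℝ) (e : G.Dart) (t : Set.Icc (0:ℝ) 1) :
    linExt G σ (tpt G e t) = (1 - (t : ℝ)) * σ e.fst + t * σ e.snd := rfl

theorem continuous_linExt (σ : V → ℝ) : Continuous (linExt G σ) := by
  have : DiscreteTopology G.Dart := ⟨rfl⟩
  refine continuous_quot_lift _ ?_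
  refine continuous_prod_of_discrete_left.2 ?_
  intro a
  dsimp only
  fun_prop

theorem continuous_tpt (e : G.Dart) : Continuous (tpt G e) :=
  continuous_quot_mk.comp (by fun_prop)

theorem tpt_symm (e : G.Dart) (t s : Set.Icc (0:ℝ) 1) (h : (s : ℝ) = 1 - t) :
    tpt G e.symm s = tpt G e t :=
  Quot.sound (Or.inl ⟨rfl, h⟩)

theorem tpt_vertex (e e' : G.Dart) (t s : Set.Icc (0:ℝ) 1) (h : e.fst = e'.fst)
    (ht : (t : ℝ) = 0) (hs : (s : ℝ) = 0) : tpt G e t = tpt G e' s :=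
  Quot.sound (Or.inr ⟨h, ht, hs⟩)

theorem tree_compact [Fintype V] : CompactSpace (TreeSpace G) := by
  have : Finite G.Dart := Finite.of_injective (fun d : G.Dart => d.toProd) 
    (fun a b h => SimpleGraph.Dart.ext _ _ h)
  exact Quot.compactSpace

theorem tpt_injective (e : G.Dart) : Function.Injective (tpt G e) := by
  intro t s h
  have := congrArg (linExt G (fun v => if v = e.snd then 1 else 0)) h
  simp only [linExt_tpt, e.adj.ne, if_true, if_false] at this
  exact Subtype.ext (by linarith)

theorem tree_sep (hconn : G.Connected) (hacyc : G.IsAcyclic) : SepProp (TreeSpace G) := by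
  have bridge : ∀ e : G.Dart, ¬ (G.deleteEdges {s(e.fst, e.snd)}).Reachable e.fst e.snd := by
    intro e
    exact SimpleGraph.isBridge_iff.1 (SimpleGraph.isAcyclic_iff_forall_adj_isBridge.1 hacyc e.adj)
  -- edges other than `e` stay on one side
  have side : ∀ e e' : G.Dart, e' ≠ e → e' ≠ e.symm →
      ((G.deleteEdges {s(e.fst, e.snd)}).Reachable e.snd e'.fst ↔
        (G.deleteEdges {s(e.fst, e.snd)}).Reachable e.snd e'.snd) := by
    intro e e' h1 h2
    have hadj : (G.deleteEdges {s(e.fst, e.snd)}).Adj e'.fst e'.snd := by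
      rw [SimpleGraph.deleteEdges_adj]
      refine ⟨e'.adj, ?_⟩
      intro hh
      simp only [Set.mem_singleton_iff, Sym2.eq_iff] at hh
      rcases hh with ⟨h3, h4⟩ | ⟨h3, h4⟩
      · exact h1 (SimpleGraph.Dart.ext _ _ (Prod.ext h3 h4))
      · exact h2 (SimpleGraph.Dart.ext _ _ (Prod.ext h3 h4))
    exact ⟨fun h => h.trans hadj.reachable, fun h => h.trans hadj.reachable.symm⟩
  intro z x hxz
  obtain ⟨⟨e, a⟩, rfl⟩ := Quot.exists_rep z
  obtain ⟨⟨e', b⟩, rfl⟩ := Quot.exists_rep x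
  change tpt G e' b ≠ tpt G e a at hxz
  change ∃ c : TreeSpace G → ℝ, Continuous c ∧ c (tpt G e a) = 0 ∧ 0 < c (tpt G e' b) ∧
    (∀ y, c y = 0 → y = tpt G e a) ∧ _
  -- the vertex case
  have vert : ∀ e : G.Dart, ∀ a : Set.Icc (0:ℝ) 1, (a : ℝ) = 0 → ∀ (e' : G.Dart)
      (b : Set.Icc (0:ℝ) 1), tpt G e' b ≠ tpt G e a → ∃ c : TreeSpace G → ℝ, Continuous c ∧
      c (tpt G e a) = 0 ∧ 0 < c (tpt G e' b) ∧ (∀ y, c y = 0 → y = tpt G e a) ∧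
      ∃ ε > 0, ∀ y y', 0 < c y → c y < ε → c y = c y' → y = y' := by
    clear hxz
    intro e a ha e' b hne
    -- choose the first edge `k` from `e.fst` towards `x`
    have hk : ∃ k : G.Dart, k.fst = e.fst ∧ ((e' = k) ∨ (e' = k.symm) ∨
        (e'.fst ≠ e.fst ∧ e'.snd ≠ e.fst ∧
        (G.deleteEdges {s(k.fst, k.snd)}).Reachable k.snd e'.fst)) := by
      by_cases h1 : e'.fst = e.fst
      · exact ⟨e', h1, Or.inl rfl⟩
      by_cases h2 : e'.snd = e.fst
      · exact ⟨e'.symm, h2, Or.inr (Or.inl (by simp))⟩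
      obtain ⟨p, hp⟩ := (hconn e.fst e'.fst).exists_isPath
      generalize e'.fst = w at p hp h1 ⊢
      cases p with
      | nil => exact absurd rfl h1
      | @cons _ u _ hadj p =>
        refine ⟨⟨(e.fst, u), hadj⟩, rfl, Or.inr (Or.inr ⟨h1, h2, ?_⟩)⟩
        rw [SimpleGraph.Walk.cons_isPath_iff] at hp
        refine ⟨p.toDeleteEdges _ ?_⟩
        intro ed hed hmem
        simp only [Set.mem_singleton_iff] at hmem
        subst hmem
        exact hp.2 (p.fst_mem_support_of_mem_edges hed)
    obtain ⟨k, hke, hk⟩ := hk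
    let R : V → Prop := fun w => (G.deleteEdges {s(k.fst, k.snd)}).Reachable k.snd w
    have hRf : ¬ R k.fst := fun h => bridge k h.symm
    have hRs : R k.snd := SimpleGraph.Reachable.refl _
    let σ : V → ℝ := fun w => if w = k.fst then 0 else if R w then 1 else -1
    have σf : σ k.fst = 0 := by simp [σ]
    have σs : σ k.snd = 1 := by simp [σ, k.adj.ne', hRs]
    have vk : ∀ t, linExt G σ (tpt G k t) = t := by
      intro t; rw [linExt_tpt, σf, σs]; ring
    have vks : ∀ t, linExt G σ (tpt G k.symm t) = 1 - t := by
      intro t; rw [linExt_tpt]; simp [σf, σs]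
    -- values on the other edges
    have other : ∀ m : G.Dart, m ≠ k → m ≠ k.symm → ∀ t,
        (linExt G σ (tpt G m t) = 1 ∧ R m.fst ∧ m.fst ≠ k.fst ∧ m.snd ≠ k.fst)
         ∨ (¬ R m.fst ∧ m.fst ≠ k.fst ∧ m.snd ≠ k.fst ∧ linExt G σ (tpt G m t) = -1)
         ∨ (m.fst = k.fst ∧ linExt G σ (tpt G m t) = - t)
         ∨ (m.snd = k.fst ∧ linExt G σ (tpt G m t) = - (1 - t)) := by
      intro m h1 h2 t
      have hs : R m.fst ↔ R m.snd := side k m h1 h2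
      by_cases h3 : m.fst = k.fst
      · have h4 : m.snd ≠ k.fst := by rw [← h3]; exact m.adj.ne'
        have h5 : ¬ R m.snd := by rw [← hs, h3]; exact hRf
        refine Or.inr (Or.inr (Or.inl ⟨h3, ?_⟩))
        rw [linExt_tpt]
        simp [σ, h3, h4, h5]
      by_cases h4 : m.snd = k.fst
      · have h5 : ¬ R m.fst := by rw [hs, h4]; exact hRf
        refine Or.inr (Or.inr (Or.inr ⟨h4, ?_⟩))
        rw [linExt_tpt]
        simp [σ, h3, h4, h5]
      by_cases h5 : R m.fst
      · have h6 := hs.1 h5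
        left
        refine ⟨?_, h5, h3, h4⟩
        rw [linExt_tpt]
        simp [σ, h3, h4, h5, h6]
      · have h6 : ¬ R m.snd := fun h => h5 (hs.2 h)
        right; left
        refine ⟨h5, h3, h4, ?_⟩
        rw [linExt_tpt]
        simp [σ, h3, h4, h5, h6]
        ring
    have hea : tpt G e a = tpt G k ⟨0, by simp⟩ := tpt_vertex G _ _ _ _ hke.symm ha rfl
    have flip : ∀ t : Set.Icc (0:ℝ) 1, tpt G k.symm t = tpt G k (unitInterval.symm t) := by
      intro t
      exact tpt_symm G k _ _ (by simp)
    have zero : ∀ y, linExt G σ y = 0 → y = tpt G e a := by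
      intro y hy
      obtain ⟨⟨m, t⟩, rfl⟩ := Quot.exists_rep y
      change linExt G σ (tpt G m t) = 0 at hy
      change tpt G m t = _
      rw [hea]
      by_cases h1 : m = k
      · subst h1
        rw [vk] at hy
        exact tpt_vertex G _ _ _ _ rfl hy rfl
      by_cases h2 : m = k.symm
      · subst h2
        rw [flip] at hy ⊢
        rw [vk] at hy
        exact tpt_vertex G _ _ _ _ rfl hy rfl
      rcases other m h1 h2 t with h | h | h | h
      · linarith [h.1]
      · linarith [h.2.2.2]
      · exact tpt_vertex G _ _ _ _ h.1 (by linarith [h.2]) rfl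
      · rw [← tpt_symm G m t (unitInterval.symm t) (by simp)]
        refine tpt_vertex G _ _ _ _ h.1 ?_ rfl
        simp only [unitInterval.coe_symm_eq]
        linarith [h.2]
    have onk : ∀ y, 0 < linExt G σ y → linExt G σ y < 1 → ∃ t, y = tpt G k t := by
      intro y h0 hlt
      obtain ⟨⟨m, t⟩, rfl⟩ := Quot.exists_rep y
      change 0 < linExt G σ (tpt G m t) at h0
      change linExt G σ (tpt G m t) < 1 at hlt
      by_cases h1 : m = k
      · subst h1
        exact ⟨t, rfl⟩
      by_cases h2 : m = k.symm
      · subst h2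
        exact ⟨_, flip t⟩
      have := t.2.1
      have := t.2.2
      rcases other m h1 h2 t with h | h | h | h
      · linarith [h.1]
      · linarith [h.2.2.2]
      · linarith [h.2]
      · linarith [h.2]
    refine ⟨linExt G σ, continuous_linExt G σ, ?_, ?_, zero, 1, one_pos, ?_⟩
    · rw [hea, vk]
    · have hnz : linExt G σ (tpt G e' b) ≠ 0 := fun h => hne (zero _ h)
      refine lt_of_le_of_ne ?_ hnz.symm
      rcases hk with rfl | rfl | ⟨h1, h2, h3⟩
      · rw [vk]; exact b.2.1
      · rw [vks]; linarith [b.2.2]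
      · by_cases h4 : e' = k
        · rw [h4, vk]; exact b.2.1
        by_cases h5 : e' = k.symm
        · rw [h5, vks]; linarith [b.2.2]
        rcases other e' h4 h5 b with h | h | h | h
        · rw [h.1]; exact zero_le_one
        · exact absurd h3 h.1
        · exact absurd (h.1.trans hke) h1
        · exact absurd (h.1.trans hke) h2
    · intro y y' h0 h1 heq
      obtain ⟨t, rfl⟩ := onk y h0 h1
      obtain ⟨t', rfl⟩ := onk y' (heq ▸ h0) (heq ▸ h1)
      rw [vk, vk] at heq
      rw [Subtype.ext heq]
  by_cases ha0 : (a : ℝ) = 0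
  · exact vert e a ha0 e' b hxz
  by_cases ha1 : (a : ℝ) = 1
  · have := tpt_symm G e a (unitInterval.symm a) (by simp)
    rw [← this] at hxz ⊢
    exact vert e.symm _ (by simp [ha1]) e' b hxz
  -- interior point of an edge
  have a0 : 0 < (a : ℝ) := lt_of_le_of_ne a.2.1 (Ne.symm ha0)
  have a1 : (a : ℝ) < 1 := lt_of_le_of_ne a.2.2 ha1
  let R : V → Prop := fun w => (G.deleteEdges {s(e.fst, e.snd)}).Reachable e.snd w
  have hRf : ¬ R e.fst := fun h => bridge e h.symm
  have hRs : R e.snd := SimpleGraph.Reachable.refl _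
  let σ : V → ℝ := fun w => if R w then 1 else 0
  have ve : ∀ t, linExt G σ (tpt G e t) = t := by
    intro t; rw [linExt_tpt]; simp [σ, hRf, hRs]
  have one : ∀ y, 0 < linExt G σ y → linExt G σ y < 1 → ∃ t, y = tpt G e t := by
    intro y h0 hlt
    obtain ⟨⟨m, t⟩, rfl⟩ := Quot.exists_rep y
    change 0 < linExt G σ (tpt G m t) at h0
    change linExt G σ (tpt G m t) < 1 at hlt
    by_cases h1 : m = e
    · subst h1
      exact ⟨t, rfl⟩
    by_cases h2 : m = e.symm
    · subst h2
      exact ⟨_, tpt_symm G e (unitInterval.symm t) t (by simp)⟩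
    have hs : R m.fst ↔ R m.snd := side e m h1 h2
    exfalso
    rw [linExt_tpt] at h0 hlt
    by_cases h5 : R m.fst
    · have h6 := hs.1 h5
      simp [σ, h5, h6] at hlt
    · have h6 : ¬ R m.snd := fun h => h5 (hs.2 h)
      simp [σ, h5, h6] at h0
  have inj : ∀ y y', 0 < linExt G σ y → linExt G σ y < 1 → linExt G σ y = linExt G σ y' →
      y = y' := by
    intro y y' h0 h1 heq
    obtain ⟨t, rfl⟩ := one y h0 h1
    obtain ⟨t', rfl⟩ := one y' (heq ▸ h0) (heq ▸ h1)
    rw [ve, ve] at heq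
    rw [Subtype.ext heq]
  have zero : ∀ y, linExt G σ y = a → y = tpt G e a := by
    intro y hy
    exact inj _ _ (by rw [hy]; exact a0) (by rw [hy]; exact a1) (by rw [hy, ve])
  rcases lt_trichotomy (linExt G σ (tpt G e' b)) a with h | h | h
  · refine ⟨fun y => a - linExt G σ y, continuous_const.sub (continuous_linExt G σ),
      by simp only [ve]; ring, by linarith, fun y hy => zero y (by linarith), a, a0, ?_⟩
    intro y y' h1 h2 h3
    exact inj y y' (by linarith) (by linarith) (by linarith)
  · exact absurd (zero _ h) hxz
  · refine ⟨fun y => linExt G σ y - a, (continuous_linExt G σ).sub continuous_const,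
      by simp only [ve]; ring, by linarith, fun y hy => zero y (by linarith), 1 - a, by linarith, ?_⟩
    intro y y' h1 h2 h3
    exact inj y y' (by linarith) (by linarith) (by linarith)

theorem tpt_arc (e : G.Dart) (t : Set.Icc (0:ℝ) 1) :
    HasArc (tpt G e ⟨0, by simp⟩) (tpt G e t) := by
  refine ⟨0, t, fun r => tpt G e (Set.projIcc 0 1 zero_le_one r), t.2.1, ?_, ?_, ?_, ?_⟩
  · exact ((continuous_tpt G e).comp continuous_projIcc).continuousOn
  · intro r hr s hs h
    have h2 := tpt_injective G e h
    rw [Set.projIcc_of_mem _ ⟨hr.1, hr.2.trans t.2.2⟩,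
      Set.projIcc_of_mem _ ⟨hs.1, hs.2.trans t.2.2⟩] at h2
    exact congrArg Subtype.val h2
  · simp
  · simp

theorem tree_arc (hconn : G.Connected) (hacyc : G.IsAcyclic) (x y : TreeSpace G) : HasArc x y := by
  have := (tree_sep G hconn hacyc).t2
  have walk : ∀ u v (_ : G.Walk u v) (e e' : G.Dart), e.fst = u → e'.fst = v →
      HasArc (tpt G e ⟨0, by simp⟩) (tpt G e' ⟨0, by simp⟩) := by
    intro u v p
    induction p with
    | nil =>
      intro e e' h1 h2
      rw [tpt_vertex G e e' ⟨0, by simp⟩ ⟨0, by simp⟩ (h1.trans h2.symm) rfl rfl]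
      exact HasArc.refl _
    | @cons u u' v hadj p ih =>
      intro e e' h1 h2
      let k : G.Dart := ⟨(u, u'), hadj⟩
      have i1 := tpt_arc G k ⟨1, by simp⟩
      rw [tpt_vertex G k e ⟨0, by simp⟩ ⟨0, by simp⟩ h1.symm rfl rfl,
        ← tpt_symm G k ⟨1, by simp⟩ ⟨0, by simp⟩ (by simp)] at i1
      exact i1.trans (ih k.symm e' rfl h2)
  obtain ⟨⟨e, a⟩, rfl⟩ := Quot.exists_rep x
  obtain ⟨⟨e', b⟩, rfl⟩ := Quot.exists_rep y
  obtain ⟨p⟩ := hconn e.fst e'.fst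
  exact ((tpt_arc G e a).symm.trans (walk _ _ p e e' rfl rfl)).trans (tpt_arc G e' b)

end TreeTop

/-! ### Combinatorics and topology of the cellular merge tree -/

namespace MergeTreeData

variable {d : MergeTreeData}

theorem val_le_parent (v : Fin d.n) : d.val v ≤ d.val (d.parent v) := by
  by_cases h : v = d.root
  · rw [h, d.hroot]
  · exact (d.hval v h).le

theorem Desc.refl (v : Fin d.n) : d.Desc v v := ⟨0, rfl⟩

theorem Desc.step (v : Fin d.n) : d.Desc v (d.parent v) := ⟨1, rfl⟩

theorem Desc.trans {u v w : Fin d.n} (h : d.Desc u v) (h' : d.Desc v w) : d.Desc u w := by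
  obtain ⟨k, rfl⟩ := h
  obtain ⟨j, rfl⟩ := h'
  exact ⟨j + k, by rw [Function.iterate_add_apply]⟩

theorem Desc.val_le {u v : Fin d.n} (h : d.Desc u v) : d.val u ≤ d.val v := by
  obtain ⟨k, rfl⟩ := h
  induction k with
  | zero => exact le_rfl
  | succ k ih =>
    rw [Function.iterate_succ_apply']
    exact ih.trans (val_le_parent _)

theorem Desc.cases_parent {u v : Fin d.n} (h : d.Desc u v) : u = v ∨ d.Desc (d.parent u) v := by
  obtain ⟨k, rfl⟩ := h
  cases k with
  | zero => exact Or.inl rfl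
  | succ k => exact Or.inr ⟨k, by rw [Function.iterate_succ_apply]⟩

theorem Desc.comparable {u v w : Fin d.n} (h : d.Desc u v) (h' : d.Desc u w) :
    d.Desc v w ∨ d.Desc w v := by
  obtain ⟨k, rfl⟩ := h
  obtain ⟨j, rfl⟩ := h'
  rcases le_total k j with hkj | hkj
  · left
    exact ⟨j - k, by rw [← Function.iterate_add_apply, Nat.sub_add_cancel hkj]⟩
  · right
    exact ⟨k - j, by rw [← Function.iterate_add_apply, Nat.sub_add_cancel hkj]⟩

/-- `w` is the highest ancestor of `v` of value at most `t`. -/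
def IsAnc (d : MergeTreeData) (t : ℝ) (v w : Fin d.n) : Prop :=
  d.Desc v w ∧ d.val w ≤ t ∧ (w = d.root ∨ t < d.val (d.parent w))

theorem IsAnc.unique_aux {t : ℝ} {v w w' : Fin d.n} (h : d.IsAnc t v w) (h' : d.IsAnc t v w')
    (hd : d.Desc w w') : w = w' := by
  rcases hd.cases_parent with h1 | h1
  · exact h1
  · rcases h.2.2 with h2 | h2
    · rw [h2] at hd ⊢
      obtain ⟨k, rfl⟩ := hd
      exact (Function.iterate_fixed d.hroot k).symm
    · exact absurd (h1.val_le.trans h'.2.1) (not_le.2 h2)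

theorem IsAnc.unique {t : ℝ} {v w w' : Fin d.n} (h : d.IsAnc t v w) (h' : d.IsAnc t v w') :
    w = w' := by
  rcases h.1.comparable h'.1 with hd | hd
  · exact h.unique_aux h' hd
  · exact (h'.unique_aux h hd).symm

theorem exists_isAnc {t : ℝ} {v : Fin d.n} (h : d.val v ≤ t) : ∃ w, d.IsAnc t v w := by
  have hfin : {w | d.Desc v w ∧ d.val w ≤ t}.Finite := Set.toFinite _
  obtain ⟨w, hw, hmax⟩ := hfin.exists_maximalFor d.val _ ⟨v, Desc.refl v, h⟩
  refine ⟨w, hw.1, hw.2, ?_⟩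
  by_contra hcon
  push Not at hcon
  have := hmax ⟨hw.1.trans (Desc.step w), hcon.2⟩ (val_le_parent w)
  exact absurd this (not_le.2 (d.hval w hcon.1))

/-- The highest ancestor of `v` of value at most `t` (junk if there is none). -/
def anc (d : MergeTreeData) (t : ℝ) (v : Fin d.n) : Fin d.n :=
  if h : ∃ w, d.IsAnc t v w then h.choose else v

theorem anc_spec {t : ℝ} {v : Fin d.n} (h : d.val v ≤ t) : d.IsAnc t v (d.anc t v) := by
  have := exists_isAnc h
  rw [anc, dif_pos this]
  exact this.choose_spec

theorem IsAnc.anc_eq {t : ℝ} {v w : Fin d.n} (h : d.IsAnc t v w) : d.anc t v = w :=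
  (anc_spec (h.1.val_le.trans h.2.1)).unique h

theorem anc_eq_of_desc {t : ℝ} {v u : Fin d.n} (h : d.Desc v u) (hu : d.val u ≤ t) :
    d.anc t v = d.anc t u := by
  have := anc_spec hu
  exact IsAnc.anc_eq ⟨h.trans this.1, this.2⟩

theorem anc_anc {s t : ℝ} {v : Fin d.n} (hv : d.val v ≤ s) (hst : s ≤ t) :
    d.anc t (d.anc s v) = d.anc t v :=
  (anc_eq_of_desc (anc_spec hv).1 ((anc_spec hv).2.1.trans hst)).symm

theorem leaf_desc {l v : Fin d.n} (hl : d.IsLeafNode l) (h : d.Desc v l) : v = l := by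
  obtain ⟨k, hk⟩ := h
  induction k with
  | zero => exact hk
  | succ k ih =>
    rw [Function.iterate_succ_apply'] at hk
    exact ih (hl _ hk)

theorem child_ne_root {v w : Fin d.n} (h : d.parent w = v) (hne : w ≠ v) : w ≠ d.root := by
  rintro rfl
  exact hne (d.hroot.symm.trans h)

theorem exists_leaf (v : Fin d.n) : ∃ l : d.Leaf, d.Desc l.1 v := by
  have hfin : {w | d.Desc w v}.Finite := Set.toFinite _
  obtain ⟨w, hw, hmin⟩ := hfin.exists_minimalFor d.val _ ⟨v, Desc.refl v⟩
  refine ⟨⟨w, ?_⟩, hw⟩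
  intro u hu
  by_contra hne
  have h1 := d.hval u (child_ne_root hu hne)
  rw [hu] at h1
  exact absurd (hmin (j := u) ((hu ▸ Desc.step u : d.Desc u w).trans hw) h1.le) (not_le.2 h1)

theorem exists_lca (u w : Fin d.n) : ∃ a, d.IsLCA u w a := by
  have hex : ∃ k, d.Desc w (d.parent^[k] u) := by
    obtain ⟨k, hk⟩ := d.hreach u
    exact ⟨k, hk ▸ d.hreach w⟩
  refine ⟨d.parent^[Nat.find hex] u, ⟨_, rfl⟩, Nat.find_spec hex, ?_⟩
  rintro b ⟨j, rfl⟩ hb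
  have := Nat.find_min' hex hb
  exact ⟨j - Nat.find hex, by rw [← Function.iterate_add_apply, Nat.sub_add_cancel this]⟩

theorem lca_iff {u w a : Fin d.n} (h : d.IsLCA u w a) {t : ℝ} (hu : d.val u ≤ t)
    (hw : d.val w ≤ t) : d.anc t u = d.anc t w ↔ d.val a ≤ t := by
  constructor
  · intro he
    have h1 := anc_spec hu
    have h2 := anc_spec hw
    rw [← he] at h2
    exact (h.2.2 _ h1.1 h2.1).val_le.trans h1.2.1
  · intro ha
    rw [anc_eq_of_desc h.1 ha, anc_eq_of_desc h.2.1 ha]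

/-- A point of the cellular merge tree. -/
def pt (d : MergeTreeData) (v : Fin d.n) (s : ℝ) (h : (v, s) ∈ d.Carrier) : d.Space :=
  Quot.mk d.glueRel ⟨(v, s), h⟩

/-- The normal form of a point of the cellular merge tree. -/
def nrm (d : MergeTreeData) : d.Space → Fin d.n :=
  Quot.lift (fun a => d.anc a.1.2 a.1.1) (by
    rintro ⟨⟨v, s⟩, hv⟩ ⟨⟨w, s'⟩, hw⟩ ⟨h1, h2, h3⟩
    simp only at h1 h2 h3 ⊢
    subst h1 h2
    exact anc_eq_of_desc (Desc.step v) h3.ge)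

theorem nrm_pt {v : Fin d.n} {s : ℝ} (h : (v, s) ∈ d.Carrier) :
    d.nrm (d.pt v s h) = d.anc s v := rfl

theorem gauge_pt {v : Fin d.n} {s : ℝ} (h : (v, s) ∈ d.Carrier) :
    d.gauge (d.pt v s h) = s := rfl

theorem exists_pt (P : d.Space) : ∃ v s h, P = d.pt v s h := by
  obtain ⟨⟨⟨v, s⟩, h⟩, rfl⟩ := Quot.exists_rep P
  exact ⟨v, s, h, rfl⟩

theorem bot_mem (v : Fin d.n) : (v, d.val v) ∈ d.Carrier := ⟨le_rfl, fun _ => val_le_parent v⟩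

theorem IsAnc.mem {t : ℝ} {v w : Fin d.n} (h : d.IsAnc t v w) : (w, t) ∈ d.Carrier := by
  refine ⟨h.2.1, fun hr => ?_⟩
  rcases h.2.2 with h2 | h2
  · exact absurd h2 hr
  · exact h2.le

theorem pt_anc {v : Fin d.n} {s : ℝ} (h : (v, s) ∈ d.Carrier) (h' : (d.anc s v, s) ∈ d.Carrier) :
    d.pt v s h = d.pt (d.anc s v) s h' := by
  by_cases hc : v = d.root ∨ s < d.val (d.parent v)
  · have : d.anc s v = v := IsAnc.anc_eq ⟨Desc.refl v, h.1, hc⟩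
    congr 1
    exact this.symm
  · push Not at hc
    have hs : s = d.val (d.parent v) := le_antisymm (h.2 hc.1) hc.2
    have ha : d.anc s v = d.parent v := by
      refine IsAnc.anc_eq ⟨Desc.step v, hc.2, ?_⟩
      by_cases hr : d.parent v = d.root
      · exact Or.inl hr
      · right
        rw [hs]
        exact d.hval _ hr
    exact Quot.sound ⟨rfl, ha.symm, hs⟩

theorem space_ext {P Q : d.Space} (h : d.nrm P = d.nrm Q) (h' : d.gauge P = d.gauge Q) : P = Q := by
  obtain ⟨v, s, hv, rfl⟩ := exists_pt P
  obtain ⟨w, s', hw, rfl⟩ := exists_pt Q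
  rw [gauge_pt, gauge_pt] at h'
  subst h'
  rw [nrm_pt, nrm_pt] at h
  rw [pt_anc hv (anc_spec hv.1).mem, pt_anc hw (anc_spec hw.1).mem]
  congr 1

theorem val_nrm_le (P : d.Space) : d.val (d.nrm P) ≤ d.gauge P := by
  obtain ⟨v, s, hv, rfl⟩ := exists_pt P
  exact (anc_spec hv.1).2.1

theorem anc_nrm (P : d.Space) : d.anc (d.gauge P) (d.nrm P) = d.nrm P := by
  obtain ⟨v, s, hv, rfl⟩ := exists_pt P
  exact anc_anc hv.1 le_rfl

theorem anc_const {K : Set d.Space} (hK : IsPreconnected K) {t : ℝ} (ht : ∀ P ∈ K, d.gauge P ≤ t)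
    {P Q : d.Space} (hP : P ∈ K) (hQ : Q ∈ K) : d.anc t (d.nrm P) = d.anc t (d.nrm Q) := by
  refine hK.constant (f := fun P => d.anc t (d.nrm P)) ?_ hP hQ
  rw [continuousOn_iff_isClosed]
  intro T _
  refine ⟨{P | d.gauge P ≤ t ∧ d.anc t (d.nrm P) ∈ T}, ?_, ?_⟩
  · refine (isQuotientMap_quot_mk (r := d.glueRel)).isClosed_preimage.1 ?_
    have : (Quot.mk d.glueRel) ⁻¹' {P | d.gauge P ≤ t ∧ d.anc t (d.nrm P) ∈ T} =
        {a : d.Carrier | a.1.2 ≤ t} ∩ (fun a : d.Carrier => a.1.1) ⁻¹' {v | d.anc t v ∈ T} := by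
      ext ⟨⟨v, s⟩, hv⟩
      change (s ≤ t ∧ d.anc t (d.anc s v) ∈ T) ↔ (s ≤ t ∧ d.anc t v ∈ T)
      refine and_congr_right fun hst => ?_
      rw [anc_anc hv.1 hst]
    refine (congrArg IsClosed this).mpr ?_
    refine IsClosed.inter (isClosed_le (by fun_prop) continuous_const) ?_
    exact (isClosed_discrete _).preimage (by fun_prop)
  · ext P
    constructor
    · rintro ⟨h1, h2⟩
      exact ⟨⟨ht P h2, h1⟩, h2⟩
    · rintro ⟨h1, h2⟩
      exact ⟨h1.2, h2⟩

theorem leaf_anc {l : Fin d.n} : d.anc (d.val l) l = l := by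
  refine IsAnc.anc_eq ⟨Desc.refl l, le_rfl, ?_⟩
  by_cases h : l = d.root
  · exact Or.inl h
  · exact Or.inr (d.hval l h)

theorem carrier_closed : IsClosed d.Carrier := by
  have : d.Carrier = {p : Fin d.n × ℝ | d.val p.1 ≤ p.2} ∩
      ((Prod.fst ⁻¹' {d.root}) ∪ {p : Fin d.n × ℝ | p.2 ≤ d.val (d.parent p.1)}) := by
    ext p
    by_cases h : p.1 = d.root <;> simp [Carrier, h]
  rw [this]
  have c : ∀ k : Fin d.n → ℝ, Continuous k := fun k => continuous_of_discreteTopology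
  refine (isClosed_le ((c _).comp continuous_fst) continuous_snd).inter (IsClosed.union ?_ ?_)
  · exact (isClosed_discrete _).preimage continuous_fst
  · exact isClosed_le continuous_snd ((c (fun v => d.val (d.parent v))).comp continuous_fst)

end MergeTreeData

/-! ### Sublevel components and the merge tree of a function -/

section Func

variable {X : Type*} [TopologicalSpace X] {f : X → ℝ}

/-- Component of a sublevel set. -/
abbrev comp (f : X → ℝ) (t : ℝ) (x : X) : Set X := connectedComponentIn (sub f t) x

theorem comp_le {t : ℝ} {x y : X} (h : y ∈ comp f t x) : f y ≤ t := by
  have h1 : y ∈ sub f t := connectedComponentIn_subset _ _ h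
  exact h1

theorem mtRel_equiv : Equivalence (mtRel f) := by
  refine ⟨fun a => ⟨rfl, mem_connectedComponentIn a.2⟩, ?_, ?_⟩
  · rintro ⟨⟨x, t⟩, hx⟩ ⟨⟨y, s⟩, hy⟩ ⟨h1, h2⟩
    simp only at h1 h2
    subst h1
    refine ⟨rfl, ?_⟩
    simp only
    rw [← connectedComponentIn_eq h2]
    exact mem_connectedComponentIn hy
  · rintro ⟨⟨x, t⟩, hx⟩ ⟨⟨y, s⟩, hy⟩ ⟨⟨z, r⟩, hz⟩ ⟨h1, h2⟩ ⟨h3, h4⟩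
    simp only at h1 h2 h3 h4
    subst h1 h3
    refine ⟨rfl, ?_⟩
    simp only
    rw [connectedComponentIn_eq h4]
    exact h2

/-- A point of the merge tree of `f`. -/
def mpt (f : X → ℝ) (x : X) (t : ℝ) (h : f x ≤ t) : MergeTree f := Quot.mk (mtRel f) ⟨(x, t), h⟩

theorem mpt_eq_iff {x y : X} {t : ℝ} {hx : f x ≤ t} {hy : f y ≤ t} :
    mpt f x t hx = mpt f y t hy ↔ x ∈ comp f t y := by
  constructor
  · intro h
    exact (mtRel_equiv.eqvGen_iff.1 (Quot.eqvGen_exact h)).2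
  · intro h
    exact Quot.sound ⟨rfl, h⟩

theorem mtGauge_mpt {x : X} {t : ℝ} {hx : f x ≤ t} : mtGauge f (mpt f x t hx) = t := rfl

theorem exists_mpt (P : MergeTree f) : ∃ x t h, P = mpt f x t h := by
  obtain ⟨⟨⟨x, t⟩, h⟩, rfl⟩ := Quot.exists_rep P
  exact ⟨x, t, h, rfl⟩

theorem comp_locmin {x : X} {c : ℝ} (hx : f x ≤ c) (h : ∀ y ∈ comp f c x, f y = c) :
    IsLocMin f (comp f c x) := by
  refine ⟨isConnected_connectedComponentIn_iff.2 hx, ⟨c, h⟩, ?_⟩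
  intro M' hM' hss
  by_contra hcon
  push Not at hcon
  have hsub : M' ⊆ sub f c := by
    intro z hz
    obtain ⟨y, hy, hzy⟩ := hcon z hz
    rw [h y hy] at hzy
    exact hzy
  exact hss.2 (hM'.isPreconnected.subset_connectedComponentIn
    (hss.1 (mem_connectedComponentIn hx)) hsub)

theorem IsLocMin.eq_comp {M : Set X} (h : IsLocMin f M) {x : X} (hx : x ∈ M) :
    M = comp f (f x) x := by
  obtain ⟨h1, ⟨c, hc⟩, h3⟩ := h
  have hsub : M ⊆ comp f (f x) x := by
    refine h1.isPreconnected.subset_connectedComponentIn hx ?_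
    intro y hy
    exact (hc y hy).trans (hc x hx).symm |>.le
  by_contra hne
  obtain ⟨y, hy, hlt⟩ := h3 _ (isConnected_connectedComponentIn_iff.2 (show f x ≤ f x from le_rfl))
    (hsub.ssubset_of_ne hne)
  exact absurd (connectedComponentIn_subset _ _ hy) (not_le.2 (hlt x hx))

theorem IsLocMin.const {M : Set X} (h : IsLocMin f M) {x y : X} (hx : x ∈ M) (hy : y ∈ M) :
    f x = f y := by
  obtain ⟨c, hc⟩ := h.2.1
  rw [hc x hx, hc y hy]

theorem comp_closed (hf : Continuous f) (t : ℝ) (x : X) : IsClosed (comp f t x) := by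
  by_cases hx : f x ≤ t
  · have h1 : closure (comp f t x) ⊆ sub f t :=
      closure_minimal (connectedComponentIn_subset _ _) (isClosed_le hf continuous_const)
    have h2 : closure (comp f t x) ⊆ comp f t x :=
      isPreconnected_connectedComponentIn.closure.subset_connectedComponentIn
        (subset_closure (mem_connectedComponentIn hx)) h1
    exact isClosed_of_closure_subset h2
  · rw [comp, connectedComponentIn_eq_empty (F := sub f t) hx]
    exact isClosed_empty

theorem exists_locmin [CompactSpace X] (hf : Continuous f) {x : X} {t : ℝ} (hx : f x ≤ t) :
    ∃ M, IsLocMin f M ∧ M ⊆ comp f t x := by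
  obtain ⟨y, hy, hmin⟩ := (comp_closed hf t x).isCompact.exists_isMinOn
    ⟨x, mem_connectedComponentIn hx⟩ hf.continuousOn
  have hyt : f y ≤ t := comp_le hy
  have hsub : comp f (f y) y ⊆ comp f t x := by
    rw [comp, comp, connectedComponentIn_eq hy]
    exact connectedComponentIn_mono _ (fun z hz => le_trans hz hyt)
  refine ⟨_, comp_locmin le_rfl ?_, hsub⟩
  intro z hz
  exact le_antisymm (comp_le hz) (hmin (hsub hz))

/-- The total set of a growing component is closed. -/
theorem comp_total_closed (hsep : SepProp X) (harc : ∀ x y : X, HasArc x y) (hf : Continuous f)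
    (x0 : X) : IsClosed {p : X × ℝ | p.1 ∈ comp f p.2 x0} := by
  rw [← isOpen_compl_iff, isOpen_iff_mem_nhds]
  rintro ⟨x, t⟩ hxt
  have hs : ∃ s > t, x ∉ comp f s x0 := by
    by_contra hcon
    push Not at hcon
    apply hxt
    obtain ⟨a, b, g, hab, hg, hi, rfl, rfl⟩ := harc x0 x
    have hx0 : ∀ s > t, g a ∈ comp f s (g a) := by
      intro s hst
      refine mem_connectedComponentIn ?_
      by_contra hne
      have := hcon s hst
      rw [comp, connectedComponentIn_eq_empty hne] at this
      exact this
    have hall : ∀ r ∈ Set.Icc a b, f (g r) ≤ t := by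
      intro r hr
      refine le_of_forall_gt_imp_ge_of_dense fun s hst => ?_
      exact comp_le (x := g a) (arc_subset hsep hg hi
        isPreconnected_connectedComponentIn (hx0 s hst) (hcon s hst) r hr)
    refine (isPreconnected_Icc.image g hg).subset_connectedComponentIn
      ⟨a, ⟨le_rfl, hab⟩, rfl⟩ ?_ ⟨b, ⟨hab, le_rfl⟩, rfl⟩
    rintro _ ⟨r, hr, rfl⟩
    exact hall r hr
  obtain ⟨s, hst, hxs⟩ := hs
  have hU : {p : X × ℝ | p.1 ∉ comp f s x0 ∧ p.2 < s} ∈ nhds (x, t) := by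
    refine IsOpen.mem_nhds ?_ ⟨hxs, hst⟩
    exact (((comp_closed hf s x0).isOpen_compl).preimage continuous_fst).inter
      (isOpen_lt continuous_snd continuous_const)
  refine Filter.mem_of_superset hU ?_
  rintro ⟨y, r⟩ ⟨h1, h2⟩ h3
  exact h1 (connectedComponentIn_mono _ (fun z hz => le_trans hz (le_of_lt h2)) h3)

end Func

/-! ### The two directions -/

section Main

variable {X : Type*} [TopologicalSpace X] {f : X → ℝ} {d : MergeTreeData}

open MergeTreeData

theorem key_up (φ : MergeTree f ≃ₜ d.Space) (hφ : ∀ P, d.gauge (φ P) = mtGauge f P)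
    {x : X} {s t : ℝ} (hs : f x ≤ s) (ht : f x ≤ t) (hst : s ≤ t) :
    d.nrm (φ (mpt f x t ht)) = d.anc t (d.nrm (φ (mpt f x s hs))) := by
  have : PreconnectedSpace (Set.Icc s t) := Subtype.preconnectedSpace isPreconnected_Icc
  let k : Set.Icc s t → d.Space := fun r => φ (mpt f x r (hs.trans r.2.1))
  have hk : Continuous k := by
    refine φ.continuous.comp ?_
    refine (continuous_quot_mk (r := mtRel f)).comp ?_
    exact Continuous.subtype_mk (by fun_prop) _
  have h1 := anc_const (d := d) (isPreconnected_range hk) (t := t) ?_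
    (P := φ (mpt f x t ht)) (Q := φ (mpt f x s hs)) ⟨⟨t, hst, le_rfl⟩, rfl⟩ ⟨⟨s, le_rfl, hst⟩, rfl⟩
  · rw [← h1]
    have := anc_nrm (φ (mpt f x t ht))
    rw [hφ, mtGauge_mpt] at this
    exact this.symm
  · rintro _ ⟨r, rfl⟩
    simp only [k]
    rw [hφ, mtGauge_mpt]
    exact r.2.2

theorem forward (hsep : SepProp X) (hf : Continuous f) (h : GaugedIso (mtGauge f) d.gauge) :
    ∃ e : d.Leaf ≃ {M : Set X // IsLocMin f M},
        (∀ l : d.Leaf, ∀ x ∈ (e l).1, f x = d.val l.1) ∧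
        (∀ l l' : d.Leaf, l ≠ l' → ∀ a : Fin d.n, d.IsLCA l.1 l'.1 a →
          ∀ (p q : X) (γ : Path p q), p ∈ (e l).1 → q ∈ (e l').1 →
            Function.Injective γ →
            Set.range γ ∩ (e l).1 = {p} → Set.range γ ∩ (e l').1 = {q} →
            IsGreatest (f '' Set.range γ) (d.val a)) := by
  obtain ⟨φ, hφ⟩ := h
  have hex : ∀ l : d.Leaf, ∃ x, ∃ hx : f x ≤ d.val l.1,
      φ (mpt f x (d.val l.1) hx) = d.pt l.1 (d.val l.1) (bot_mem _) := by
    intro l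
    obtain ⟨x, t, hx, hP⟩ := exists_mpt (φ.symm (d.pt l.1 (d.val l.1) (bot_mem _)))
    have h1 := hφ (mpt f x t hx)
    rw [← hP, φ.apply_symm_apply, gauge_pt, hP, mtGauge_mpt] at h1
    subst h1
    exact ⟨x, hx, by rw [← hP, φ.apply_symm_apply]⟩
  choose x hx hxφ using hex
  have hnl : ∀ l : d.Leaf, d.nrm (φ (mpt f (x l) (d.val l.1) (hx l))) = l.1 := by
    intro l
    rw [hxφ, nrm_pt, leaf_anc]
  have hval : ∀ l : d.Leaf, ∀ y ∈ comp f (d.val l.1) (x l), f y = d.val l.1 := by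
    intro l y hy
    have hyl := comp_le hy
    refine le_antisymm hyl ?_
    have h1 := key_up φ hφ (le_refl (f y)) hyl hyl
    rw [mpt_eq_iff (hx := hyl) (hy := hx l) |>.2 hy, hnl] at h1
    have h2 := val_nrm_le (φ (mpt f y (f y) le_rfl))
    rw [hφ, mtGauge_mpt] at h2
    have h3 := anc_spec (h2.trans hyl)
    rw [← h1] at h3
    rw [leaf_desc l.2 h3.1] at h2
    exact h2
  have hlm : ∀ l : d.Leaf, IsLocMin f (comp f (d.val l.1) (x l)) :=
    fun l => comp_locmin (hx l) (hval l)
  have hup : ∀ (l : d.Leaf) (t : ℝ) (ht : f (x l) ≤ t), d.val l.1 ≤ t →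
      d.nrm (φ (mpt f (x l) t ht)) = d.anc t l.1 := by
    intro l t ht hlt
    rw [key_up φ hφ (hx l) ht hlt, hnl]
  have same : ∀ (l l' : d.Leaf) (t : ℝ), d.val l.1 ≤ t → d.val l'.1 ≤ t →
      (x l' ∈ comp f t (x l) ↔ d.anc t l.1 = d.anc t l'.1) := by
    intro l l' t h1 h2
    have g1 := (hx l).trans h1
    have g2 := (hx l').trans h2
    rw [← mpt_eq_iff (hx := g2) (hy := g1), ← hup l t g1 h1, ← hup l' t g2 h2]
    constructor
    · intro h
      rw [h]
    · intro h
      refine φ.injective (space_ext h.symm ?_)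
      rw [hφ, hφ]
      rfl
  let E : d.Leaf → {M : Set X // IsLocMin f M} := fun l => ⟨comp f (d.val l.1) (x l), hlm l⟩
  have hxE : ∀ l, x l ∈ (E l).1 := fun l => mem_connectedComponentIn (hx l)
  have hE : Function.Bijective E := by
    constructor
    · intro l l' hll
      have hm : x l' ∈ comp f (d.val l.1) (x l) := by
        have := hxE l'
        rw [← hll] at this
        exact this
      have hv : d.val l.1 = d.val l'.1 := by
        rw [← hval l _ hm, hval l' _ (hxE l')]
      have h1 := (same l l' (d.val l.1) le_rfl hv.ge).1 hm
      rw [leaf_anc, hv, leaf_anc] at h1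
      exact Subtype.ext h1
    · rintro ⟨M, hM⟩
      obtain ⟨z, hz⟩ := hM.1.nonempty
      have hMz := hM.eq_comp hz
      set P := φ (mpt f z (f z) le_rfl) with hP
      have gP : d.gauge P = f z := by rw [hφ, mtGauge_mpt]
      have claim : ∀ Q : d.Space, d.gauge Q ≤ f z → d.anc (f z) (d.nrm Q) = d.nrm P →
          d.gauge Q = f z := by
        intro Q hQ hQP
        obtain ⟨y, s, hy, hQy⟩ := exists_mpt (φ.symm Q)
        have hQ2 : Q = φ (mpt f y s hy) := by rw [← hQy, φ.apply_symm_apply]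
        have gQ : d.gauge Q = s := by rw [hQ2, hφ, mtGauge_mpt]
        rw [gQ] at hQ ⊢
        have h1 := key_up φ hφ hy (hy.trans hQ) hQ
        rw [← hQ2, hQP] at h1
        have h2 : φ (mpt f y (f z) (hy.trans hQ)) = P := by
          refine space_ext h1 ?_
          rw [hφ, gP]
          rfl
        have h3 := mpt_eq_iff.1 (φ.injective h2)
        rw [← hMz] at h3
        have h4 := hM.const h3 hz
        exact le_antisymm hQ (h4 ▸ hy)
      have hvP : d.val (d.nrm P) ≤ f z := gP ▸ val_nrm_le P
      have hancP : d.anc (f z) (d.nrm P) = d.nrm P := gP ▸ anc_nrm P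
      have hv : d.val (d.nrm P) = f z := by
        have := claim (d.pt (d.nrm P) (d.val (d.nrm P)) (bot_mem _)) hvP
        rw [gauge_pt, nrm_pt, leaf_anc] at this
        exact this hancP
      have hleaf : d.IsLeafNode (d.nrm P) := by
        intro w hw
        by_contra hne
        have h1 := d.hval w (child_ne_root hw hne)
        rw [hw, hv] at h1
        have h2 := claim (d.pt w (d.val w) (bot_mem _)) h1.le
        rw [gauge_pt, nrm_pt, leaf_anc] at h2
        refine h1.ne (h2 ?_)
        rw [anc_eq_of_desc (t := f z) (Desc.step w) (by rw [hw, hv]), hw, hancP]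
      refine ⟨⟨d.nrm P, hleaf⟩, Subtype.ext ?_⟩
      set l : d.Leaf := ⟨d.nrm P, hleaf⟩ with hl
      have hlv : d.val l.1 = f z := hv
      change comp f (d.val l.1) (x l) = M
      have h1 : φ (mpt f (x l) (f z) (hlv ▸ hx l)) = P := by
        refine space_ext ?_ ?_
        · rw [hup l _ _ hlv.le]
          exact hancP
        · rw [hφ, gP]
          rfl
      have h3 := mpt_eq_iff.1 (φ.injective h1)
      rw [hlv, hMz]
      exact (connectedComponentIn_eq h3).symm
  refine ⟨Equiv.ofBijective E hE, fun l y hy => hval l y hy, ?_⟩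
  intro l l' hll a ha p q γ hp hq hinj _ _
  change p ∈ comp f (d.val l.1) (x l) at hp
  change q ∈ comp f (d.val l'.1) (x l') at hq
  -- components at a common level
  have up : ∀ (m : d.Leaf) (t : ℝ), d.val m.1 ≤ t →
      comp f (d.val m.1) (x m) ⊆ comp f t (x m) := by
    intro m t hm
    exact connectedComponentIn_mono _ (fun z hz => le_trans hz hm)
  obtain ⟨y, hy, hmax⟩ := (isCompact_range γ.continuous).exists_isMaxOn
    (Set.range_nonempty γ) hf.continuousOn
  have hpr : p ∈ Set.range γ := ⟨0, by simp⟩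
  have hqr : q ∈ Set.range γ := ⟨1, by simp⟩
  have hlp : d.val l.1 ≤ f y := by rw [← hval l p hp]; exact hmax hpr
  have hlq : d.val l'.1 ≤ f y := by rw [← hval l' q hq]; exact hmax hqr
  have e1 : d.val a ≤ f y := by
    rw [← lca_iff ha hlp hlq, ← same l l' _ hlp hlq]
    have h1 : q ∈ comp f (f y) p :=
      (isPreconnected_range γ.continuous).subset_connectedComponentIn hpr
        (fun z hz => hmax hz) hqr
    have h2 := connectedComponentIn_eq (up l _ hlp hp)
    have h3 := connectedComponentIn_eq (up l' _ hlq hq)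
    have h4 := connectedComponentIn_eq h1
    change x l' ∈ connectedComponentIn _ _
    rw [h2, h4, ← h3]
    exact mem_connectedComponentIn ((hx l').trans hlq)
  have e2 : f y ≤ d.val a := by
    have hla := ha.1.val_le
    have hla' := ha.2.1.val_le
    have h1 := (same l l' _ hla hla').2 ((lca_iff ha hla hla').2 le_rfl)
    have h2 : q ∈ comp f (d.val a) (x l) := by
      change q ∈ connectedComponentIn _ _
      rw [connectedComponentIn_eq h1]
      exact up l' _ hla' hq
    exact comp_le (path_subset hsep γ hinj isPreconnected_connectedComponentIn
      (up l _ hla hp) h2 hy)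
  have e3 : d.val a = f y := le_antisymm e1 e2
  rw [e3]
  refine ⟨⟨y, hy, rfl⟩, ?_⟩
  rintro _ ⟨z, hz, rfl⟩
  exact hmax hz

theorem backward [CompactSpace X] (hsep : SepProp X) (harc : ∀ x y : X, HasArc x y)
    (hf : Continuous f) (e : d.Leaf ≃ {M : Set X // IsLocMin f M})
    (hval : ∀ l : d.Leaf, ∀ x ∈ (e l).1, f x = d.val l.1)
    (hpath : ∀ l l' : d.Leaf, l ≠ l' → ∀ a : Fin d.n, d.IsLCA l.1 l'.1 a →
          ∀ (p q : X) (γ : Path p q), p ∈ (e l).1 → q ∈ (e l').1 →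
            Function.Injective γ →
            Set.range γ ∩ (e l).1 = {p} → Set.range γ ∩ (e l').1 = {q} →
            IsGreatest (f '' Set.range γ) (d.val a)) :
    GaugedIso (mtGauge f) d.gauge := by
  have hne : ∀ l : d.Leaf, ∃ x, x ∈ (e l).1 := fun l => (e l).2.1.nonempty
  choose x hxe using hne
  have hfx : ∀ l, f (x l) = d.val l.1 := fun l => hval l _ (hxe l)
  have hcomp : ∀ l, ∀ y ∈ (e l).1, (e l).1 = comp f (d.val l.1) y := by
    intro l y hy
    have := (e l).2.eq_comp hy
    rwa [hval l y hy] at this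
  have hin : ∀ l t, d.val l.1 ≤ t → (e l).1 ⊆ comp f t (x l) := by
    intro l t ht
    rw [hcomp l _ (hxe l)]
    exact connectedComponentIn_mono _ (fun z hz => le_trans hz ht)
  have same : ∀ (l l' : d.Leaf) (t : ℝ), d.val l.1 ≤ t → d.val l'.1 ≤ t →
      (x l ∈ comp f t (x l') ↔ d.anc t l.1 = d.anc t l'.1) := by
    intro l l' t h1 h2
    by_cases hll : l = l'
    · subst hll
      simp only [iff_true]
      exact mem_connectedComponentIn ((hfx l).le.trans h1)
    have hdis : Disjoint (e l).1 (e l').1 := by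
      rw [Set.disjoint_left]
      intro y hy hy'
      apply hll
      apply e.injective
      apply Subtype.ext
      rw [hcomp l y hy, hcomp l' y hy', ← hval l y hy, ← hval l' y hy']
    have hcl : ∀ l, IsClosed (e l).1 := by
      intro l
      rw [hcomp l _ (hxe l)]
      exact comp_closed hf _ _
    obtain ⟨a, ha⟩ := exists_lca l.1 l'.1
    obtain ⟨p, q, γ, hp, hq, hinj, r1, r2⟩ := exists_path_trim (hcl l) (hcl l') hdis
      (hxe l) (hxe l') (harc _ _)
    have hG := hpath l l' hll a ha p q γ hp hq hinj r1 r2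
    have hp' := connectedComponentIn_eq (hin l t h1 hp)
    have hq' := connectedComponentIn_eq (hin l' t h2 hq)
    have hpr : p ∈ Set.range γ := ⟨0, by simp⟩
    have hqr : q ∈ Set.range γ := ⟨1, by simp⟩
    rw [lca_iff ha h1 h2]
    constructor
    · intro h
      have hpC : p ∈ comp f t (x l') := by
        change p ∈ connectedComponentIn _ _
        rw [connectedComponentIn_eq h]
        exact hin l t h1 hp
      have hsub := path_subset hsep γ hinj isPreconnected_connectedComponentIn hpC
        (hin l' t h2 hq)
      obtain ⟨z, hz, hza⟩ := hG.1
      rw [← hza]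
      exact comp_le (hsub hz)
    · intro h
      have h3 : p ∈ comp f t q :=
        (isPreconnected_range γ.continuous).subset_connectedComponentIn hqr
          (fun z hz => (hG.2 ⟨z, hz, rfl⟩).trans h) hpr
      change x l ∈ connectedComponentIn _ _
      rw [hq', connectedComponentIn_eq h3, ← hp']
      exact mem_connectedComponentIn ((hfx l).le.trans h1)
  -- a leaf below each node
  have hlam : ∀ v : Fin d.n, ∃ l : d.Leaf, d.Desc l.1 v := exists_leaf
  choose lam hlam using hlam
  have hle : ∀ v s, (v, s) ∈ d.Carrier → d.val (lam v).1 ≤ s :=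
    fun v s h => (hlam v).val_le.trans h.1
  have hfle : ∀ v s, (v, s) ∈ d.Carrier → f (x (lam v)) ≤ s :=
    fun v s h => (hfx _).le.trans (hle v s h)
  let Φ0 : d.Carrier → MergeTree f := fun a =>
    mpt f (x (lam a.1.1)) a.1.2 (hfle a.1.1 a.1.2 a.2)
  have hΦeq : ∀ (v w : Fin d.n) (s : ℝ) (hv : (v, s) ∈ d.Carrier) (hw : (w, s) ∈ d.Carrier),
      Φ0 ⟨(v, s), hv⟩ = Φ0 ⟨(w, s), hw⟩ ↔ d.anc s v = d.anc s w := by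
    intro v w s hv hw
    simp only [Φ0]
    rw [mpt_eq_iff, same _ _ _ (hle v s hv) (hle w s hw), anc_eq_of_desc (hlam v) hv.1,
      anc_eq_of_desc (hlam w) hw.1]
  have hΦglue : ∀ a b : d.Carrier, d.glueRel a b → Φ0 a = Φ0 b := by
    rintro ⟨⟨v, s⟩, hv⟩ ⟨⟨w, s'⟩, hw⟩ ⟨g1, g2, g3⟩
    simp only at g1 g2 g3
    subst g1 g2
    rw [hΦeq]
    exact anc_eq_of_desc (Desc.step v) g3.ge
  let Φ : d.Space → MergeTree f := Quot.lift Φ0 hΦglue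
  have hΦg : ∀ P, mtGauge f (Φ P) = d.gauge P := by
    intro P
    obtain ⟨v, s, hv, rfl⟩ := exists_pt P
    rfl
  have hΦc : Continuous Φ := by
    refine continuous_quot_lift _ ?_
    refine (continuous_quot_mk (r := mtRel f)).comp ?_
    refine Continuous.subtype_mk ?_ _
    refine Continuous.prodMk ?_ (by fun_prop)
    have : Continuous (fun v : Fin d.n => x (lam v)) := continuous_of_discreteTopology
    exact this.comp (by fun_prop)
  have hΦi : Function.Injective Φ := by
    intro P Q h
    have hg : d.gauge P = d.gauge Q := by rw [← hΦg, h, hΦg]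
    obtain ⟨v, s, hv, rfl⟩ := exists_pt P
    obtain ⟨w, s', hw, rfl⟩ := exists_pt Q
    rw [gauge_pt, gauge_pt] at hg
    subst hg
    exact space_ext ((hΦeq v w s hv hw).1 h) rfl
  have hΦs : Function.Surjective Φ := by
    intro P
    obtain ⟨y, t, hy, rfl⟩ := exists_mpt P
    obtain ⟨M, hM, hMc⟩ := exists_locmin hf hy
    obtain ⟨l, hl⟩ := e.surjective ⟨M, hM⟩
    have hxl : x l ∈ comp f t y := by
      apply hMc
      have := hxe l
      rw [hl] at this
      exact this
    have hlt : d.val l.1 ≤ t := (hfx l).symm.le.trans (comp_le hxl)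
    have hA := anc_spec hlt
    refine ⟨d.pt _ t hA.mem, ?_⟩
    change mpt f (x (lam (d.anc t l.1))) t _ = _
    rw [mpt_eq_iff]
    change _ ∈ connectedComponentIn _ _
    rw [connectedComponentIn_eq hxl]
    refine (same _ _ _ (hle _ _ hA.mem) hlt).2 ?_
    rw [anc_eq_of_desc (hlam _) hA.2.1, anc_anc hlt le_rfl]
  have hΦcl : IsClosedMap Φ := by
    intro C hC
    refine (isQuotientMap_quot_mk (r := mtRel f)).isClosed_preimage.1 ?_
    let D : Fin d.n → Set ℝ := fun v => {t | ∃ h : (v, t) ∈ d.Carrier, d.pt v t h ∈ C}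
    have hD : ∀ v, IsClosed (D v) := by
      intro v
      have h1 : IsClosed ((Quot.mk d.glueRel) ⁻¹' C) :=
        (isQuotientMap_quot_mk (r := d.glueRel)).isClosed_preimage.2 hC
      have h2 := (carrier_closed (d := d)).isClosedEmbedding_subtypeVal.isClosedMap _ h1
      have h3 : D v = (fun t : ℝ => ((v, t) : Fin d.n × ℝ)) ⁻¹'
          (Subtype.val '' ((Quot.mk d.glueRel) ⁻¹' C)) := by
        ext t
        constructor
        · rintro ⟨h, hm⟩
          exact ⟨⟨(v, t), h⟩, hm, rfl⟩
        · rintro ⟨⟨⟨v', t'⟩, h⟩, hm, heq⟩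
          simp only [Prod.mk.injEq] at heq
          obtain ⟨rfl, rfl⟩ := heq
          exact ⟨h, hm⟩
      rw [h3]
      exact h2.preimage (by fun_prop)
    have hset : (Quot.mk (mtRel f)) ⁻¹' (Φ '' C) = ⋃ v : Fin d.n,
        ((Subtype.val : epi f → X × ℝ) ⁻¹' {p : X × ℝ | p.1 ∈ comp f p.2 (x (lam v))}) ∩
          ((fun a : epi f => a.1.2) ⁻¹' D v) := by
      ext ⟨⟨y, t⟩, hy⟩
      simp only [Set.mem_iUnion]
      constructor
      · rintro ⟨P, hP, hPy⟩
        obtain ⟨v, s, hv, rfl⟩ := exists_pt P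
        have hg : s = t := congrArg (mtGauge f) hPy
        subst hg
        refine ⟨v, ?_, hv, hP⟩
        exact mpt_eq_iff (hx := hy) (hy := hfle v s hv) |>.1 hPy.symm
      · rintro ⟨v, h1, hv, hP⟩
        refine ⟨_, hP, ?_⟩
        exact (mpt_eq_iff (hx := hy) (hy := hfle v t hv) |>.2 h1).symm
    refine (congrArg IsClosed hset).mpr ?_
    refine isClosed_iUnion_of_finite fun v => IsClosed.inter ?_ ?_
    · exact (comp_total_closed hsep harc hf _).preimage continuous_subtype_val
    · exact (hD v).preimage (by fun_prop)
  let H := (Equiv.ofBijective Φ ⟨hΦi, hΦs⟩).toHomeomorphOfContinuousClosed hΦc hΦcl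
  refine ⟨H.symm, fun P => ?_⟩
  have h1 := hΦg (H.symm P)
  have h2 : Φ (H.symm P) = P := H.apply_symm_apply P
  rw [← h1, h2]

end Main

/-- Characterization of functions on a geometric tree with a given generic cellular merge
tree `T` (given by data `d`): `MT(f) ≅ T` iff there is a correspondence `e` between the
leaves of `T` and the local minima of `f` such that (1) the local minimum corresponding to a
leaf has the leaf's value, and (2) for distinct leaves `l, l'`, the maximum of `f` over the
shortest path between the corresponding local minima is attained and equals the value of
`LCA(l,l')`. -/
theorem stmt15 {V : Type} [Fintype V] (G : SimpleGraph V)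
    (hconn : G.Connected) (hacyc : G.IsAcyclic)
    (d : MergeTreeData) (hgen : d.Generic)
    (f : TreeSpace G → ℝ) (hf : Continuous f)
    (hmin : {M : Set (TreeSpace G) | IsLocMin f M}.Finite) :
    GaugedIso (mtGauge f) d.gauge ↔
      ∃ e : d.Leaf ≃ {M : Set (TreeSpace G) // IsLocMin f M},
        (∀ l : d.Leaf, ∀ x ∈ (e l).1, f x = d.val l.1) ∧
        (∀ l l' : d.Leaf, l ≠ l' → ∀ a : Fin d.n, d.IsLCA l.1 l'.1 a →
          ∀ (p q : TreeSpace G) (γ : Path p q), p ∈ (e l).1 → q ∈ (e l').1 →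
            Function.Injective γ →
            Set.range γ ∩ (e l).1 = {p} → Set.range γ ∩ (e l').1 = {q} →
            IsGreatest (f '' Set.range γ) (d.val a)) := by
  have hsep := tree_sep G hconn hacyc
  have := tree_compact G
  constructor
  · exact forward hsep hf
  · rintro ⟨e, h1, h2⟩
    exact backward hsep (tree_arc G hconn hacyc) hf e h1 h2
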